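/- arXiv:1810.07126 — 2 statements merged into one kernel-verified Lean document; each statement's English description precedes it below -/
import Mathlib

section
/- Let G and G' be two continuous concordance-inducing distribution functions, and let κ_G(C) and κ_{G'}(C) denote the corresponding G-transformed rank correlation coefficients evaluated at a bivariate copula C (i.e., κ_G(C) = ρ(G^{-1}(U1), G^{-1}(U2)) for (U1,U2) ~ C). If κ_G(C) = κ_{G'}(C) for all bivariate copulas C, then G and G' are of the same type. -/
open MeasureTheory ProbabilityTheory Set

noncomputable section

/-- The uniform distribution on (0,1). -/
def unif01 : Measure ℝ := volume.restrict (Set.Ioo (0:ℝ) 1)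

/-- Pearson's correlation coefficient of two real random variables. -/
def pearson {Ω : Type*} [MeasurableSpace Ω] (μ : Measure Ω) (Y1 Y2 : Ω → ℝ) : ℝ :=
  ((∫ ω, Y1 ω * Y2 ω ∂μ) - (∫ ω, Y1 ω ∂μ) * (∫ ω, Y2 ω ∂μ)) /
    Real.sqrt (variance Y1 μ * variance Y2 μ)

/-- The distribution function (CDF) of a measure on ℝ. -/
def cdfOf (ν : Measure ℝ) : ℝ → ℝ := fun x => (ν (Set.Iic x)).toReal

/-- The quantile function (generalized inverse) of a distribution function. -/
def quantileFn (G : ℝ → ℝ) (p : ℝ) : ℝ := sInf {x : ℝ | p ≤ G x}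

/-- The joint distribution function of a measure on ℝ². -/
def cdf2 (μ : Measure (ℝ × ℝ)) (u v : ℝ) : ℝ := (μ (Set.Iic u ×ˢ Set.Iic v)).toReal

/-- A (bivariate) copula: the joint law of a random vector with uniform (0,1) margins. -/
structure IsCopula (μ : Measure (ℝ × ℝ)) : Prop where
  prob : IsProbabilityMeasure μ
  fst_marginal : μ.map Prod.fst = unif01
  snd_marginal : μ.map Prod.snd = unif01

/-- Two distributions on ℝ are of the same type. -/
def SameType (ν G : Measure ℝ) : Prop :=
  ∃ a b : ℝ, 0 < a ∧ ν = G.map (fun x => a * x + b)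

/-- A distribution on ℝ is symmetric (about some point `m`). -/
def SymmetricDist (G : Measure ℝ) : Prop :=
  ∃ m : ℝ, G.map (fun x => 2 * m - x) = G

/-- A distribution on ℝ is non-degenerate: it is not a point mass. -/
def Nondegenerate (G : Measure ℝ) : Prop := ∀ c : ℝ, G ≠ Measure.dirac c

/-- A distribution is concordance inducing: non-degenerate, symmetric,
with finite second moment. -/
def ConcordanceInducing (G : Measure ℝ) : Prop :=
  Nondegenerate G ∧ SymmetricDist G ∧ Integrable (fun x : ℝ => x ^ 2) G

/-- The G-transformed rank correlation coefficient of a copula: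
`κ_G(C) = ρ(G⁻¹(U1), G⁻¹(U2))` for `(U1,U2) ~ C`. -/
def kappaG (G : Measure ℝ) (C : Measure (ℝ × ℝ)) : ℝ :=
  pearson C (fun p => quantileFn (cdfOf G) p.1) (fun p => quantileFn (cdfOf G) p.2)

instance unif01_prob : IsProbabilityMeasure unif01 := by
  constructor
  simp [unif01]

lemma q_le_iff (ν : Measure ℝ) [IsProbabilityMeasure ν] (hc : Continuous (cdfOf ν))
    {p : ℝ} (hp : p ∈ Ioo (0:ℝ) 1) (x : ℝ) :
    quantileFn (cdfOf ν) p ≤ x ↔ p ≤ cdfOf ν x := by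
  have hcdf : cdfOf ν = cdf ν := by
    funext y; rw [cdf_eq_real]; rfl
  have hmono : Monotone (cdfOf ν) := by rw [hcdf]; exact monotone_cdf ν
  have hb : BddBelow {x : ℝ | p ≤ cdfOf ν x} := by
    have h := (tendsto_cdf_atBot ν).eventually (gt_mem_nhds hp.1)
    obtain ⟨a, ha⟩ := h.exists
    refine ⟨a, fun y hy => ?_⟩
    by_contra hlt
    push Not at hlt
    have h1 := hmono hlt.le
    have h2 : p ≤ cdfOf ν y := hy
    rw [hcdf] at h1 h2
    linarith
  have hne : {x : ℝ | p ≤ cdfOf ν x}.Nonempty := by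
    have h := (tendsto_cdf_atTop ν).eventually (lt_mem_nhds hp.2)
    obtain ⟨a, ha⟩ := h.exists
    exact ⟨a, by rw [mem_setOf_eq, hcdf]; exact ha.le⟩
  have hcl : IsClosed {x : ℝ | p ≤ cdfOf ν x} := isClosed_le continuous_const hc
  constructor
  · intro h
    have h1 : p ≤ cdfOf ν (quantileFn (cdfOf ν) p) := hcl.csInf_mem hne hb
    exact h1.trans (hmono h)
  · intro h
    exact csInf_le hb h

lemma q_mono (ν : Measure ℝ) [IsProbabilityMeasure ν] (hc : Continuous (cdfOf ν)) :
    MonotoneOn (quantileFn (cdfOf ν)) (Ioo (0:ℝ) 1) := by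
  intro p hp q hq hpq
  rw [q_le_iff ν hc hp]
  exact hpq.trans ((q_le_iff ν hc hq _).1 le_rfl)

lemma q_meas (ν : Measure ℝ) [IsProbabilityMeasure ν] (hc : Continuous (cdfOf ν)) :
    AEMeasurable (quantileFn (cdfOf ν)) unif01 :=
  aemeasurable_restrict_of_monotoneOn measurableSet_Ioo (q_mono ν hc)

lemma unif01_Iic {t : ℝ} (h1 : t ≤ 1) : unif01 (Iic t) = ENNReal.ofReal t := by
  rw [unif01, Measure.restrict_apply measurableSet_Iic]
  rw [measure_congr (Filter.EventuallyEq.rfl.inter Ioo_ae_eq_Ioc : (Iic t ∩ Ioo (0:ℝ) 1 : Set ℝ) =ᵐ[volume] (Iic t ∩ Ioc 0 1 : Set ℝ))]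
  have : Iic t ∩ Ioc (0:ℝ) 1 = Ioc 0 t := by
    ext x; simp only [mem_inter_iff, mem_Iic, mem_Ioc]
    constructor
    · rintro ⟨a, b, c⟩; exact ⟨b, a⟩
    · rintro ⟨a, b⟩; exact ⟨b, a, b.trans h1⟩
  rw [this]; simp

lemma ae_Ioo : ∀ᵐ p ∂unif01, p ∈ Ioo (0:ℝ) 1 := ae_restrict_mem measurableSet_Ioo

lemma q_law (ν : Measure ℝ) [IsProbabilityMeasure ν] (hc : Continuous (cdfOf ν)) :
    unif01.map (quantileFn (cdfOf ν)) = ν := by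
  have : IsProbabilityMeasure (unif01.map (quantileFn (cdfOf ν))) :=
    Measure.isProbabilityMeasure_map (q_meas ν hc)
  refine Measure.ext_of_Iic _ _ fun x => ?_
  rw [Measure.map_apply_of_aemeasurable (q_meas ν hc) measurableSet_Iic]
  have h : (quantileFn (cdfOf ν) ⁻¹' Iic x : Set ℝ) =ᵐ[unif01] (Iic (cdfOf ν x) : Set ℝ) := by
    filter_upwards [ae_Ioo] with p hp
    exact propext (q_le_iff ν hc hp x)
  rw [measure_congr h, unif01_Iic]
  · exact ENNReal.ofReal_toReal (measure_ne_top _ _)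
  · exact measureReal_le_one (μ := ν)

lemma q_memLp (ν : Measure ℝ) [IsProbabilityMeasure ν] (hc : Continuous (cdfOf ν))
    (h2 : Integrable (fun x : ℝ => x ^ 2) ν) : MemLp (quantileFn (cdfOf ν)) 2 unif01 := by
  rw [memLp_two_iff_integrable_sq (q_meas ν hc).aestronglyMeasurable]
  rw [← q_law ν hc] at h2
  exact (integrable_map_measure (by fun_prop) (q_meas ν hc)).1 h2

lemma q_var_pos (ν : Measure ℝ) [IsProbabilityMeasure ν] (hc : Continuous (cdfOf ν))
    (h2 : Integrable (fun x : ℝ => x ^ 2) ν) (hn : Nondegenerate ν) :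
    0 < variance (quantileFn (cdfOf ν)) unif01 := by
  refine lt_of_le_of_ne (variance_nonneg _ _) fun h0 => ?_
  have hL := q_memLp ν hc h2
  have h3 : evariance (quantileFn (cdfOf ν)) unif01 = 0 := by
    rw [← hL.ofReal_variance_eq, ← h0]; simp
  rw [evariance_eq_zero_iff (q_meas ν hc)] at h3
  apply hn (∫ x, quantileFn (cdfOf ν) x ∂unif01)
  conv_lhs => rw [← q_law ν hc]
  rw [Measure.map_congr h3, Measure.map_const]
  simp

/-- the perturbation function -/
def aF (t : ℝ) (u : ℝ) : ℝ := t - (Iic t).indicator (fun _ => (1:ℝ)) u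

lemma aF_meas (t : ℝ) : Measurable (aF t) :=
  measurable_const.sub (measurable_const.indicator measurableSet_Iic)

lemma aF_bound {t : ℝ} (ht : t ∈ Ioo (0:ℝ) 1) (u : ℝ) : |aF t u| ≤ 1 := by
  unfold aF
  by_cases h : u ∈ Iic t
  · rw [indicator_of_mem h, abs_le]; constructor <;> linarith [ht.1, ht.2]
  · rw [indicator_of_notMem h, abs_le]; constructor <;> linarith [ht.1, ht.2]

lemma aF_mul_int {t : ℝ} {f : ℝ → ℝ} (hf : Integrable f unif01) :
    Integrable (fun u => f u * aF t u) unif01 ∧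
    ∫ u, f u * aF t u ∂unif01 = t * (∫ u, f u ∂unif01) - ∫ u in Iic t, f u ∂unif01 := by
  have h : (fun u => f u * aF t u) = fun u => t * f u - (Iic t).indicator f u := by
    funext u
    unfold aF
    by_cases h : u ∈ Iic t
    · rw [indicator_of_mem h, indicator_of_mem h]; ring
    · rw [indicator_of_notMem h, indicator_of_notMem h]; ring
  rw [h]
  refine ⟨(hf.const_mul t).sub (hf.indicator measurableSet_Iic), ?_⟩
  rw [integral_sub (hf.const_mul t) (hf.indicator measurableSet_Iic), integral_const_mul,
    integral_indicator measurableSet_Iic]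

lemma aF_int {t : ℝ} (ht : t ∈ Ioo (0:ℝ) 1) : ∫ u, aF t u ∂unif01 = 0 := by
  have h := (aF_mul_int (t := t) (integrable_const (μ := unif01) (1:ℝ))).2
  simp only [one_mul] at h
  rw [h]
  simp [measureReal_def, unif01_Iic ht.2.le, ht.1.le]

lemma aF_integrable (t : ℝ) : Integrable (aF t) unif01 := by
  have h := (aF_mul_int (t := t) (integrable_const (μ := unif01) (1:ℝ))).1
  simpa only [one_mul] using h

/-- the copula -/
def cop (t : ℝ) : Measure (ℝ × ℝ) :=
  (unif01.prod unif01).withDensity (fun p => ENNReal.ofReal (1 + aF t p.1 * aF t p.2))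

lemma dens_nonneg {t : ℝ} (ht : t ∈ Ioo (0:ℝ) 1) (u v : ℝ) : 0 ≤ 1 + aF t u * aF t v := by
  have h : |aF t u * aF t v| ≤ 1 := by
    rw [abs_mul]; exact mul_le_one₀ (aF_bound ht u) (abs_nonneg _) (aF_bound ht v)
  linarith [(abs_le.1 h).1]

lemma dens_meas (t : ℝ) : Measurable (fun p : ℝ × ℝ => ENNReal.ofReal (1 + aF t p.1 * aF t p.2)) :=
  (measurable_const.add (((aF_meas t).comp measurable_fst).mul
    ((aF_meas t).comp measurable_snd))).ennreal_ofReal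

lemma dens_int {t : ℝ} (ht : t ∈ Ioo (0:ℝ) 1) (u : ℝ) :
    ∫⁻ v, ENNReal.ofReal (1 + aF t u * aF t v) ∂unif01 = 1 := by
  rw [← ofReal_integral_eq_lintegral_ofReal]
  · rw [integral_add (integrable_const _) ((aF_integrable t).const_mul _), integral_const_mul,
      aF_int ht]
    simp
  · exact (integrable_const _).add ((aF_integrable t).const_mul _)
  · exact Filter.Eventually.of_forall fun v => dens_nonneg ht u v

lemma cop_fst {t : ℝ} (ht : t ∈ Ioo (0:ℝ) 1) : (cop t).map Prod.fst = unif01 := by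
  ext s hs
  rw [Measure.map_apply measurable_fst hs, cop, withDensity_apply _ (measurable_fst hs)]
  have : (Prod.fst ⁻¹' s : Set (ℝ × ℝ)) = s ×ˢ univ := by ext; simp
  rw [this, ← Measure.prod_restrict, lintegral_prod _ (dens_meas t).aemeasurable]
  simp [dens_int ht]

lemma cop_snd {t : ℝ} (ht : t ∈ Ioo (0:ℝ) 1) : (cop t).map Prod.snd = unif01 := by
  ext s hs
  rw [Measure.map_apply measurable_snd hs, cop, withDensity_apply _ (measurable_snd hs)]
  have : (Prod.snd ⁻¹' s : Set (ℝ × ℝ)) = univ ×ˢ s := by ext; simp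
  rw [this, ← Measure.prod_restrict, lintegral_prod_symm _ (dens_meas t).aemeasurable]
  have h2 : ∀ v, ∫⁻ u, ENNReal.ofReal (1 + aF t u * aF t v) ∂unif01 = 1 := by
    intro v
    rw [← dens_int ht v]; simp only [mul_comm]
  simp [h2]

lemma cop_isCopula {t : ℝ} (ht : t ∈ Ioo (0:ℝ) 1) : IsCopula (cop t) := by
  refine ⟨⟨?_⟩, cop_fst ht, cop_snd ht⟩
  have h : (cop t).map Prod.fst univ = 1 := by rw [cop_fst ht]; simp
  rwa [Measure.map_apply measurable_fst MeasurableSet.univ] at h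

lemma cop_integral {t : ℝ} (ht : t ∈ Ioo (0:ℝ) 1) {f : ℝ → ℝ} (hf : Integrable f unif01) :
    ∫ p, f p.1 * f p.2 ∂(cop t) = (∫ u, f u ∂unif01) * (∫ u, f u ∂unif01)
      + (∫ u, f u * aF t u ∂unif01) ^ 2 := by
  rw [cop, integral_withDensity_eq_integral_toReal_smul (dens_meas t)
    (Filter.Eventually.of_forall fun p => ENNReal.ofReal_lt_top)]
  have h : ∀ p : ℝ × ℝ, (ENNReal.ofReal (1 + aF t p.1 * aF t p.2)).toReal • (f p.1 * f p.2)
      = f p.1 * f p.2 + (f p.1 * aF t p.1) * (f p.2 * aF t p.2) := by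
    intro p
    rw [ENNReal.toReal_ofReal (dens_nonneg ht _ _), smul_eq_mul]; ring
  simp only [h]
  have hg := (aF_mul_int (t := t) hf).1
  rw [integral_add (hf.mul_prod hf) (hg.mul_prod hg), integral_prod_mul f f,
    integral_prod_mul (fun u => f u * aF t u) (fun u => f u * aF t u)]
  ring

lemma var_marg {C : Measure (ℝ × ℝ)} {π : ℝ × ℝ → ℝ} (hπ : Measurable π)
    (h : C.map π = unif01) {f : ℝ → ℝ} (hf : AEMeasurable f unif01) :
    variance (fun p => f (π p)) C = variance f unif01 := by
  rw [← h] at hf ⊢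
  exact (variance_map hf hπ.aemeasurable).symm

lemma mean_marg {C : Measure (ℝ × ℝ)} {π : ℝ × ℝ → ℝ} (hπ : Measurable π)
    (h : C.map π = unif01) {f : ℝ → ℝ} (hf : AEMeasurable f unif01) :
    ∫ p, f (π p) ∂C = ∫ u, f u ∂unif01 := by
  rw [← h] at hf ⊢
  exact (integral_map hπ.aemeasurable hf.aestronglyMeasurable).symm

lemma kappa_cop {t : ℝ} (ht : t ∈ Ioo (0:ℝ) 1) (ν : Measure ℝ) [IsProbabilityMeasure ν]
    (hc : Continuous (cdfOf ν)) (h2 : Integrable (fun x : ℝ => x ^ 2) ν) :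
    kappaG ν (cop t) = ((∫ u, quantileFn (cdfOf ν) u * aF t u ∂unif01) /
      Real.sqrt (variance (quantileFn (cdfOf ν)) unif01)) ^ 2 := by
  have hi := (q_memLp ν hc h2).integrable (by norm_num)
  have hm := q_meas ν hc
  unfold kappaG pearson
  rw [cop_integral ht hi, var_marg measurable_fst (cop_fst ht) hm,
    var_marg measurable_snd (cop_snd ht) hm, mean_marg measurable_fst (cop_fst ht) hm,
    mean_marg measurable_snd (cop_snd ht) hm, Real.sqrt_mul_self (variance_nonneg _ _), div_pow,
    Real.sq_sqrt (variance_nonneg _ _)]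
  ring

lemma q_aF_nonneg {t : ℝ} (ht : t ∈ Ioo (0:ℝ) 1) {f : ℝ → ℝ} (hf : Integrable f unif01)
    (hm : MonotoneOn f (Ioo (0:ℝ) 1)) : 0 ≤ ∫ u, f u * aF t u ∂unif01 := by
  have h : ∫ u, f u * aF t u ∂unif01 = ∫ u, (f u - f t) * aF t u ∂unif01 := by
    simp only [sub_mul]
    rw [integral_sub (aF_mul_int hf).1 ((aF_integrable t).const_mul _), integral_const_mul,
      aF_int ht]
    simp
  rw [h]
  refine integral_nonneg_of_ae ?_
  filter_upwards [ae_Ioo] with u hu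
  simp only [Pi.zero_apply]
  unfold aF
  by_cases h : u ∈ Iic t
  · rw [indicator_of_mem h]
    exact mul_nonneg_of_nonpos_of_nonpos (by linarith [hm hu ht h]) (by linarith [ht.2])
  · rw [indicator_of_notMem h]
    have h' : t < u := not_le.1 h
    exact mul_nonneg (by linarith [hm ht hu h'.le]) (by linarith [ht.1])

lemma ae_zero_of_Iic {F : ℝ → ℝ} (hF : Integrable F unif01)
    (h : ∀ t, ∫ u in Iic t, F u ∂unif01 = 0) (h1 : ∫ u, F u ∂unif01 = 0) : F =ᵐ[unif01] 0 := by
  refine hF.ae_eq_zero_of_forall_setIntegral_eq_zero fun s hs _ => ?_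
  induction s, hs using MeasurableSpace.induction_on_inter
    (borel_eq_generateFrom_Iic ℝ ▸ (BorelSpace.measurable_eq (α := ℝ))) isPiSystem_Iic with
  | empty => simp
  | basic s hs => obtain ⟨t, rfl⟩ := hs; exact h t
  | compl s hs ih =>
    have h3 := integral_add_compl hs hF
    rw [ih (measure_lt_top _ _), h1, zero_add] at h3
    exact h3
  | iUnion g hd hg ih =>
    rw [integral_iUnion hg hd hF.integrableOn]
    simp [fun i => ih i (measure_lt_top _ _)]

/-- uniqueness of G-functions. If two continuous concordance-inducing
distribution functions `G, G'` give the same transformed rank correlation on all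
bivariate copulas, then `G` and `G'` are of the same type. -/
theorem uniqueness_of_G_functions
    (ν ν' : Measure ℝ) [IsProbabilityMeasure ν] [IsProbabilityMeasure ν']
    (hcont : Continuous (cdfOf ν)) (hcont' : Continuous (cdfOf ν'))
    (hG : ConcordanceInducing ν) (hG' : ConcordanceInducing ν')
    (heq : ∀ C : Measure (ℝ × ℝ), IsCopula C → kappaG ν C = kappaG ν' C) :
    SameType ν ν' := by
  obtain ⟨hn, -, h2⟩ := hG
  obtain ⟨hn', -, h2'⟩ := hG'
  have hv := Real.sqrt_pos.2 (q_var_pos ν hcont h2 hn)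
  have hv' := Real.sqrt_pos.2 (q_var_pos ν' hcont' h2' hn')
  have hi := (q_memLp ν hcont h2).integrable (by norm_num)
  have hi' := (q_memLp ν' hcont' h2').integrable (by norm_num)
  have hk : ∀ t ∈ Ioo (0:ℝ) 1, kappaG ν (cop t) = kappaG ν' (cop t) :=
    fun t ht => heq _ (cop_isCopula ht)
  have hk2 : ∀ t ∈ Ioo (0:ℝ) 1, _ := fun t ht => by
    have h := hk t ht
    rw [kappa_cop ht ν hcont h2, kappa_cop ht ν' hcont' h2'] at h
    exact (sq_eq_sq₀ (div_nonneg (q_aF_nonneg ht hi (q_mono ν hcont)) hv.le)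
      (div_nonneg (q_aF_nonneg ht hi' (q_mono ν' hcont')) hv'.le)).1 h
  have hlaw := q_law ν hcont
  have hlaw' := q_law ν' hcont'
  have hm' := q_meas ν' hcont'
  clear hk heq
  set s := Real.sqrt (variance (quantileFn (cdfOf ν)) unif01)
  set s' := Real.sqrt (variance (quantileFn (cdfOf ν')) unif01)
  set Q := quantileFn (cdfOf ν)
  set Q' := quantileFn (cdfOf ν')
  set m := ∫ u, Q u ∂unif01 with hm0
  set m' := ∫ u, Q' u ∂unif01 with hm0'
  have i1 : Integrable (fun u => Q u / s - Q' u / s') unif01 :=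
    (hi.div_const s).sub (hi'.div_const s')
  have hF : Integrable (fun u => (Q u / s - Q' u / s') - (m / s - m' / s')) unif01 :=
    i1.sub (integrable_const _)
  have hF1 : ∫ u, ((Q u / s - Q' u / s') - (m / s - m' / s')) ∂unif01 = 0 := by
    rw [integral_sub i1 (integrable_const _), integral_sub (hi.div_const s) (hi'.div_const s'),
      integral_div, integral_div]
    simp [← hm0, ← hm0']
  have hF0 : ∀ t, ∫ u in Iic t, ((Q u / s - Q' u / s') - (m / s - m' / s')) ∂unif01 = 0 := by
    intro t
    rcases le_or_gt t 0 with h0 | h0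
    · refine setIntegral_measure_zero _ ?_
      rw [unif01_Iic (by linarith)]; simpa using h0
    rcases le_or_gt 1 t with h1 | h1
    · rw [setIntegral_congr_set (t := univ), setIntegral_univ, hF1]
      filter_upwards [ae_Ioo] with u hu
      exact propext ⟨fun _ => trivial, fun _ => hu.2.le.trans h1⟩
    · have h := hk2 t ⟨h0, h1⟩
      rw [(aF_mul_int hi).2, (aF_mul_int hi').2, ← hm0, ← hm0'] at h
      rw [integral_sub i1.integrableOn (integrable_const _),
        integral_sub (hi.div_const s).integrableOn (hi'.div_const s').integrableOn,
        integral_div, integral_div, setIntegral_const, measureReal_def, unif01_Iic h1.le,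
        ENNReal.toReal_ofReal h0.le, smul_eq_mul]
      simp only [sub_div, mul_div_assoc] at h
      linarith
  have hae := ae_zero_of_Iic hF hF0 hF1
  refine ⟨s / s', m - s / s' * m', div_pos hv hv', ?_⟩
  conv_rhs => rw [← hlaw']
  rw [AEMeasurable.map_map_of_aemeasurable (by fun_prop) hm', ← hlaw]
  refine Measure.map_congr ?_
  filter_upwards [hae] with u hu
  simp only [Pi.zero_apply] at hu
  simp only [Function.comp_apply]
  have hs := hv.ne'
  have hs' := hv'.ne'
  field_simp at hu ⊢
  linarith
end
end

section
/- The set B_d of d×d matrices of pairwise Blomqvist's beta coefficients of d-dimensional random vectors with continuous margins coincides with the set P^B_d(1/2) of d×d Pearson correlation matrices of random vectors with all margins Bern(1/2). -/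
open MeasureTheory ProbabilityTheory Set

noncomputable section

/-- `corrSet ν d` is the set of `d×d` Pearson correlation matrices of random vectors
all of whose margins have distribution `ν`. -/
def corrSet (ν : Measure ℝ) (d : ℕ) : Set (Matrix (Fin d) (Fin d) ℝ) :=
  {P | ∃ μ : Measure (Fin d → ℝ), IsProbabilityMeasure μ ∧
        (∀ j, μ.map (fun x => x j) = ν) ∧
        (∀ i j, P i j = pearson μ (fun x => x i) (fun x => x j))}

/-- The Bernoulli distribution `Bern(p)` on ℝ. -/
def bern (p : ℝ) : Measure ℝ :=
  ENNReal.ofReal p • Measure.dirac (1:ℝ) + ENNReal.ofReal (1 - p) • Measure.dirac (0:ℝ)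

/-- The set of `d×d` correlation matrices of random vectors with `Bern(1/2)` margins. -/
def PBd (d : ℕ) : Set (Matrix (Fin d) (Fin d) ℝ) := corrSet (bern (1/2)) d

/-- The set of all `d×d` correlation matrices: symmetric positive semi-definite
matrices with entries in `[-1,1]` and unit diagonal. -/
def Pd (d : ℕ) : Set (Matrix (Fin d) (Fin d) ℝ) :=
  {P | P.IsSymm ∧ (∀ i j, P i j ∈ Set.Icc (-1:ℝ) 1) ∧ P.PosSemidef ∧ ∀ i, P i i = 1}

/-- The set of `d×d` matrices of pairwise Blomqvist's beta coefficients of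
`d`-dimensional random vectors with continuous margins, using the representation
`β(Xi,Xj) = ρ(1{Fi(Xi) > 1/2}, 1{Fj(Xj) > 1/2})`. -/
def Bd (d : ℕ) : Set (Matrix (Fin d) (Fin d) ℝ) :=
  {P | ∃ μ : Measure (Fin d → ℝ), IsProbabilityMeasure μ ∧
        (∀ j, Continuous (cdfOf (μ.map fun x => x j))) ∧
        (∀ i j, P i j = pearson μ
          (fun x => if 1/2 < cdfOf (μ.map fun y => y i) (x i) then (1:ℝ) else 0)
          (fun x => if 1/2 < cdfOf (μ.map fun y => y j) (x j) then (1:ℝ) else 0))}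

lemma aux_pearson_map {Ω Ω' : Type*} [MeasurableSpace Ω] [MeasurableSpace Ω'] (μ : Measure Ω)
    (f : Ω → Ω') (hf : Measurable f) (Y1 Y2 : Ω' → ℝ) (h1 : Measurable Y1) (h2 : Measurable Y2) :
    pearson (μ.map f) Y1 Y2 = pearson μ (fun x => Y1 (f x)) (fun x => Y2 (f x)) := by
  unfold pearson
  have h12 : Measurable (fun x => Y1 x * Y2 x) := h1.mul h2
  rw [integral_map hf.aemeasurable h12.aestronglyMeasurable,
    integral_map hf.aemeasurable h1.aestronglyMeasurable,
    integral_map hf.aemeasurable h2.aestronglyMeasurable,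
    variance_map h1.aemeasurable hf.aemeasurable,
    variance_map h2.aemeasurable hf.aemeasurable]
  rfl

lemma aux_pearson_congr {Ω : Type*} [MeasurableSpace Ω] (μ : Measure Ω)
    (Y1 Y2 Z1 Z2 : Ω → ℝ) (h1 : Y1 =ᵐ[μ] Z1) (h2 : Y2 =ᵐ[μ] Z2) :
    pearson μ Y1 Y2 = pearson μ Z1 Z2 := by
  unfold pearson
  have h12 : (fun x => Y1 x * Y2 x) =ᵐ[μ] fun x => Z1 x * Z2 x := h1.mul h2
  rw [integral_congr_ae h1, integral_congr_ae h2, variance_congr h1, variance_congr h2,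
    integral_congr_ae h12]

lemma aux_cdf_mono (ν : Measure ℝ) [IsProbabilityMeasure ν] : Monotone (cdfOf ν) := by
  intro a b hab
  exact ENNReal.toReal_mono (measure_ne_top _ _) (measure_mono (Iic_subset_Iic.2 hab))

lemma aux_half (ν : Measure ℝ) [IsProbabilityMeasure ν] (hc : Continuous (cdfOf ν)) :
    ν {x | 1/2 < cdfOf ν x} = ENNReal.ofReal (1/2) := by
  have hmono := aux_cdf_mono ν
  have heq : cdfOf ν = fun x => cdf ν x := by
    ext x; rw [cdf_eq_real]; rfl
  have hbot : Filter.Tendsto (cdfOf ν) Filter.atBot (nhds 0) := by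
    rw [heq]; exact tendsto_cdf_atBot ν
  have htop : Filter.Tendsto (cdfOf ν) Filter.atTop (nhds 1) := by
    rw [heq]; exact tendsto_cdf_atTop ν
  obtain ⟨p, hp⟩ := (hbot.eventually (gt_mem_nhds (show (0:ℝ) < 1/2 by norm_num))).exists
  obtain ⟨q, hq⟩ := (htop.eventually (lt_mem_nhds (show (1/2:ℝ) < 1 by norm_num))).exists
  obtain ⟨a, ha⟩ := mem_range_of_exists_le_of_exists_ge hc ⟨p, hp.le⟩ ⟨q, hq.le⟩
  set S := {x | cdfOf ν x ≤ 1/2} with hS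
  have hne : S.Nonempty := ⟨a, ha.le⟩
  have hbdd : BddAbove S := ⟨q, fun x hx => by
    by_contra h
    push Not at h
    have h1 := hmono h.le
    have h2 : cdfOf ν x ≤ 1/2 := hx
    linarith⟩
  have hcl : IsClosed S := isClosed_le hc continuous_const
  have hm : sSup S ∈ S := hcl.csSup_mem hne hbdd
  have hSeq : S = Iic (sSup S) := by
    ext x
    exact ⟨fun hx => le_csSup hbdd hx, fun hx => (hmono hx).trans hm⟩
  have hmv : cdfOf ν (sSup S) = 1/2 :=
    le_antisymm hm (ha ▸ hmono (le_csSup hbdd ha.le))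
  have hνS : ν S = ENNReal.ofReal (1/2) := by
    rw [hSeq, ← hmv]
    exact (ENNReal.ofReal_toReal (measure_ne_top _ _)).symm
  have hcompl : {x | 1/2 < cdfOf ν x} = Sᶜ := by
    ext x; simp [hS]
  rw [hcompl, prob_compl_eq_one_sub hcl.measurableSet, hνS, ← ENNReal.ofReal_one,
    ← ENNReal.ofReal_sub _ (by norm_num)]
  norm_num

lemma aux_map_ind {Ω : Type*} [MeasurableSpace Ω] (μ : Measure Ω) [IsProbabilityMeasure μ]
    (A : Set Ω) [DecidablePred (· ∈ A)] (hA : MeasurableSet A) (h : μ A = ENNReal.ofReal (1/2)) :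
    μ.map (fun x => if x ∈ A then (1:ℝ) else 0) = bern (1/2) := by
  have hAc : μ Aᶜ = ENNReal.ofReal (1 - 1/2) := by
    rw [prob_compl_eq_one_sub hA, h, ← ENNReal.ofReal_one, ← ENNReal.ofReal_sub _ (by norm_num)]
  have hmeas : Measurable (fun x => if x ∈ A then (1:ℝ) else 0) :=
    Measurable.ite hA measurable_const measurable_const
  ext s hs
  rw [Measure.map_apply hmeas hs, bern, ← h, ← hAc]
  simp only [Measure.add_apply, Measure.smul_apply, Measure.dirac_apply' _ hs, smul_eq_mul]
  by_cases h1 : (1:ℝ) ∈ s <;> by_cases h0 : (0:ℝ) ∈ s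
  · have : (fun x => if x ∈ A then (1:ℝ) else 0) ⁻¹' s = univ := by
      ext x; by_cases hx : x ∈ A <;> simp [hx, h1, h0]
    rw [this]; simp [h1, h0, measure_add_measure_compl hA]
  · have : (fun x => if x ∈ A then (1:ℝ) else 0) ⁻¹' s = A := by
      ext x; by_cases hx : x ∈ A <;> simp [hx, h1, h0]
    rw [this]; simp [h1, h0]
  · have : (fun x => if x ∈ A then (1:ℝ) else 0) ⁻¹' s = Aᶜ := by
      ext x; by_cases hx : x ∈ A <;> simp [hx, h1, h0]
    rw [this]; simp [h1, h0]
  · have : (fun x => if x ∈ A then (1:ℝ) else 0) ⁻¹' s = ∅ := by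
      ext x; by_cases hx : x ∈ A <;> simp [hx, h1, h0]
    rw [this]; simp [h1, h0]

lemma aux_unif_prob : IsProbabilityMeasure unif01 := ⟨by simp [unif01]⟩

lemma aux_unif_Iic (t : ℝ) : unif01 (Iic t) = ENNReal.ofReal (min 1 t) := by
  have : Ioc (0:ℝ) 1 ∩ Iic t = Ioc 0 (min 1 t) := by
    ext x; simp [and_assoc]
  rw [unif01, restrict_Ioo_eq_restrict_Ioc, Measure.restrict_apply measurableSet_Iic, inter_comm,
    this, Real.volume_Ioc, sub_zero]

lemma aux_cdf {d : ℕ} (μ : Measure (Fin d → ℝ)) [IsProbabilityMeasure μ] (i : Fin d)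
    (h : μ.map (fun x => x i) = bern (1/2)) (t : ℝ) :
    cdfOf (((μ.prod unif01).map (fun p : (Fin d → ℝ) × ℝ => fun j => p.1 j + p.2)).map
      (fun x => x i)) t = (max 0 (min 1 (t-1)) + max 0 (min 1 t)) / 2 := by
  haveI := aux_unif_prob
  have hT : Measurable (fun p : (Fin d → ℝ) × ℝ => fun j => p.1 j + p.2) := by fun_prop
  have hmeas : Measurable (fun y : ℝ => ENNReal.ofReal (min 1 (t - y))) := by fun_prop
  have key : (((μ.prod unif01).map (fun p : (Fin d → ℝ) × ℝ => fun j => p.1 j + p.2)).map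
      (fun x => x i)) (Iic t) = ENNReal.ofReal (1/2) * ENNReal.ofReal (min 1 (t-1))
        + ENNReal.ofReal (1/2) * ENNReal.ofReal (min 1 t) := by
    rw [Measure.map_map (by fun_prop) hT, Measure.map_apply (by fun_prop) measurableSet_Iic,
      Measure.prod_apply (measurableSet_Iic.preimage (by fun_prop))]
    have : ∀ x : Fin d → ℝ, unif01 (Prod.mk x ⁻¹' (((fun x : Fin d → ℝ => x i) ∘
        (fun p : (Fin d → ℝ) × ℝ => fun j => p.1 j + p.2)) ⁻¹' Iic t)) =
        ENNReal.ofReal (min 1 (t - x i)) := by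
      intro x
      rw [← aux_unif_Iic]
      congr 1
      ext u
      simp [le_sub_iff_add_le, add_comm]
    simp_rw [this]
    rw [← lintegral_map (μ := μ) (g := fun x => x i) hmeas (by fun_prop), h, bern,
      lintegral_add_measure, lintegral_smul_measure, lintegral_smul_measure,
      lintegral_dirac' _ hmeas, lintegral_dirac' _ hmeas]
    norm_num
  unfold cdfOf
  rw [key, ENNReal.toReal_add (by finiteness) (by finiteness), ENNReal.toReal_mul,
    ENNReal.toReal_mul, ENNReal.toReal_ofReal', ENNReal.toReal_ofReal', ENNReal.toReal_ofReal',
    max_comm (min 1 (t-1)), max_comm (min 1 t)]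
  norm_num
  ring

/-- the set of Blomqvist's beta matrices coincides with the set of
correlation matrices of random vectors with symmetric Bernoulli margins. -/
theorem blomqvist_matrices_eq_bernoulli_corr_matrices (d : ℕ) :
    Bd d = PBd d := by
  
  ext P
  constructor
  · rintro ⟨μ, hμ, hc, hP⟩
    have hprob : ∀ j, IsProbabilityMeasure (μ.map fun y : Fin d → ℝ => y j) := fun j =>
      Measure.isProbabilityMeasure_map (measurable_pi_apply j).aemeasurable
    have hmS : ∀ j, MeasurableSet {x : Fin d → ℝ | 1/2 < cdfOf (μ.map fun y => y j) (x j)} :=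
      fun j => measurableSet_lt measurable_const ((hc j).measurable.comp (measurable_pi_apply j))
    have hmc : ∀ j, Measurable (fun x : Fin d → ℝ =>
        if 1/2 < cdfOf (μ.map fun y => y j) (x j) then (1:ℝ) else 0) := fun j =>
      Measurable.ite (hmS j) measurable_const measurable_const
    have hT : Measurable (fun (x : Fin d → ℝ) (j : Fin d) =>
        if 1/2 < cdfOf (μ.map fun y => y j) (x j) then (1:ℝ) else 0) :=
      measurable_pi_lambda _ hmc
    refine ⟨μ.map _, Measure.isProbabilityMeasure_map hT.aemeasurable, fun j => ?_, fun i j => ?_⟩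
    · rw [Measure.map_map (measurable_pi_apply j) hT]
      haveI := hprob j
      have h2 := aux_half _ (hc j)
      rw [Measure.map_apply (measurable_pi_apply j)
        (measurableSet_lt measurable_const (hc j).measurable)] at h2
      exact aux_map_ind μ {x : Fin d → ℝ | 1/2 < cdfOf (μ.map fun y => y j) (x j)} (hmS j) h2
    · rw [hP, aux_pearson_map μ _ hT _ _ (measurable_pi_apply i) (measurable_pi_apply j)]
  · rintro ⟨μ, hμ, hm, hP⟩
    haveI := aux_unif_prob
    have hT : Measurable (fun p : (Fin d → ℝ) × ℝ => fun j : Fin d => p.1 j + p.2) := by fun_prop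
    have hcdf := fun j => funext (aux_cdf μ j (hm j))
    have hcont : ∀ j, Continuous (cdfOf (((μ.prod unif01).map
        (fun p : (Fin d → ℝ) × ℝ => fun j => p.1 j + p.2)).map (fun x => x j))) := by
      intro j
      rw [hcdf j]
      fun_prop
    refine ⟨(μ.prod unif01).map (fun p => fun j => p.1 j + p.2),
      Measure.isProbabilityMeasure_map hT.aemeasurable, hcont, fun i j => ?_⟩
    have hmc : ∀ j, Measurable (fun x : Fin d → ℝ =>
        if 1/2 < cdfOf (((μ.prod unif01).map
        (fun p : (Fin d → ℝ) × ℝ => fun j => p.1 j + p.2)).map (fun x => x j)) (x j)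
        then (1:ℝ) else 0) := fun j =>
      Measurable.ite (measurableSet_lt measurable_const
        ((hcont j).measurable.comp (measurable_pi_apply j))) measurable_const measurable_const
    have hae : ∀ j, (fun p : (Fin d → ℝ) × ℝ =>
        if 1/2 < cdfOf (((μ.prod unif01).map
        (fun p : (Fin d → ℝ) × ℝ => fun j => p.1 j + p.2)).map (fun x => x j)) (p.1 j + p.2)
        then (1:ℝ) else 0) =ᵐ[μ.prod unif01] fun p => p.1 j := by
      intro j
      have hb : ∀ᵐ y ∂(bern (1/2)), y = 0 ∨ y = 1 := by
        have hs : MeasurableSet {y : ℝ | ¬ (y = 0 ∨ y = 1)} := by measurability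
        rw [ae_iff, bern]
        simp [Measure.dirac_apply' _ hs]
      rw [← hm j] at hb
      have hx : ∀ᵐ x ∂μ, x j = 0 ∨ x j = 1 :=
        ae_of_ae_map (measurable_pi_apply j).aemeasurable hb
      have hu : ∀ᵐ u ∂unif01, u ∈ Ioo (0:ℝ) 1 := ae_restrict_mem measurableSet_Ioo
      have hx' := (Measure.quasiMeasurePreserving_fst (μ := μ) (ν := unif01)).ae hx
      have hu' := (Measure.quasiMeasurePreserving_snd (μ := μ) (ν := unif01)).ae hu
      filter_upwards [hx', hu'] with p h1 h2
      rw [hcdf j]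
      obtain ⟨h3, h4⟩ := h2
      rcases h1 with h1 | h1
      · rw [h1, if_neg]
        beta_reduce
        rw [min_eq_right (show 0 + p.2 - 1 ≤ 1 by linarith),
          min_eq_right (show 0 + p.2 ≤ 1 by linarith),
          max_eq_left (show 0 + p.2 - 1 ≤ 0 by linarith),
          max_eq_right (by linarith)]
        linarith
      · rw [h1, if_pos]
        beta_reduce
        rw [min_eq_right (show 1 + p.2 - 1 ≤ 1 by linarith),
          min_eq_left (show 1 ≤ 1 + p.2 by linarith),
          max_eq_right (show 0 ≤ 1 + p.2 - 1 by linarith),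
          max_eq_right (by linarith)]
        linarith
    rw [hP, aux_pearson_map _ _ hT _ _ (hmc i) (hmc j),
      aux_pearson_congr _ _ _ _ _ (hae i) (hae j)]
    have hfst : (μ.prod unif01).map Prod.fst = μ := by
      rw [Measure.map_fst_prod]; simp
    have := aux_pearson_map (μ.prod unif01) Prod.fst measurable_fst (fun x : Fin d → ℝ => x i)
      (fun x => x j) (measurable_pi_apply i) (measurable_pi_apply j)
    rw [hfst] at this
    exact this
end
end
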